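/- If T ∈ M_n(ℂ) satisfies T* = (T T*)^k T for some k ≥ 1, then ker T = ker T². -/

import Mathlib

open Matrix

theorem ker_eq_ker_sq_of_adj_eq (n : ℕ) (T : Matrix (Fin n) (Fin n) ℂ)
    (k : ℕ) (hk : 1 ≤ k) (h : Tᴴ = (T * Tᴴ) ^ k * T) :
    LinearMap.ker T.mulVecLin = LinearMap.ker (T ^ 2).mulVecLin := by
  ext x
  simp only [LinearMap.mem_ker, mulVecLin_apply]
  constructor
  · intro hx
    rw [pow_two, ← mulVec_mulVec, hx, mulVec_zero]
  · intro hx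
    open scoped ComplexOrder in
    rw [← conjTranspose_mul_self_mulVec_eq_zero, h, mul_assoc, ← pow_two, ← mulVec_mulVec, hx,
      mulVec_zero]
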